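/- arXiv:2006.03975 — 3 statements merged into one kernel-verified Lean document; each statement's English description precedes it below -/
import Mathlib

section
/- Let d ≥ 1, N ≥ 2, A, B, C > 0, let ρ : ℝ^d → ℝ be a Schwartz function with ∫_{ℝ^d} ρ = 1, and let V, W : ℝ^d → ℝ be twice continuously differentiable with all first and second derivatives of at most polynomial growth. Define ρ^N(x₁,…,x_N) = Π_{j=1}^{N} ρ(x_j). Then for every x₁ ∈ ℝ^d, ∫_{(ℝ^d)^{N−1}} [ C Δρ^N + Σ_{j=1}^{N} div_{x_j}( A ∇V(x_j) ρ^N ) + Σ_{j=1}^{N} div_{x_j}( (B/(N−1)) Σ_{k≠j} ∇W(x_j − x_k) ρ^N ) ] d(x₂,…,x_N) = C Δρ(x₁) + A div( ∇V ρ )(x₁) + B div( ρ (∇W ∗ ρ) )(x₁), where (∇W ∗ ρ)(x) = ∫_{ℝ^d} ∇W(x − y) ρ(y) dy and Δ on the left is the Laplacian on (ℝ^d)^N. -/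
open MeasureTheory
open scoped RealInnerProductSpace

/-- The divergence of a vector field `F : ℝ^d → ℝ^d` at a point `x`:
`div F x = Σ_i ⟪∂F/∂x_i (x), e_i⟫`. -/
noncomputable def vdiv {d : ℕ} (F : EuclideanSpace ℝ (Fin d) → EuclideanSpace ℝ (Fin d))
    (x : EuclideanSpace ℝ (Fin d)) : ℝ :=
  ∑ i, ⟪fderiv ℝ F x (EuclideanSpace.single i 1), EuclideanSpace.single i 1⟫

/-- The Laplacian of `f : ℝ^d → ℝ` at `x`: `Δf x = Σ_i ∂²f/∂x_i² (x)`. -/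
noncomputable def lap {d : ℕ} (f : EuclideanSpace ℝ (Fin d) → ℝ)
    (x : EuclideanSpace ℝ (Fin d)) : ℝ :=
  ∑ i, fderiv ℝ (fun y => fderiv ℝ f y (EuclideanSpace.single i 1)) x
    (EuclideanSpace.single i 1)


namespace LM

/-- Polynomially bounded. -/
def PB {E F : Type*} [NormedAddCommGroup E] [NormedAddCommGroup F] (f : E → F) : Prop :=
  ∃ (K : ℝ) (m : ℕ), 0 ≤ K ∧ ∀ x, ‖f x‖ ≤ K * (1 + ‖x‖) ^ m

section
variable {E F G : Type*} [NormedAddCommGroup E] [NormedAddCommGroup F] [NormedAddCommGroup G]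

theorem PB.mono {f : E → F} {g : E → G} (hg : PB g) (h : ∀ x, ‖f x‖ ≤ ‖g x‖) : PB f := by
  obtain ⟨K, m, hK, hb⟩ := hg
  exact ⟨K, m, hK, fun x => (h x).trans (hb x)⟩

theorem PB.const (c : F) : PB (fun _ : E => c) := ⟨‖c‖, 0, norm_nonneg _, fun x => by simp⟩

theorem PB.add {f g : E → F} (hf : PB f) (hg : PB g) : PB (fun x => f x + g x) := by
  obtain ⟨K, m, hK, hb⟩ := hf
  obtain ⟨K', m', hK', hb'⟩ := hg
  refine ⟨K + K', m + m', by positivity, fun x => ?_⟩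
  have h1 : (1:ℝ) ≤ 1 + ‖x‖ := by linarith [norm_nonneg x]
  calc ‖f x + g x‖ ≤ ‖f x‖ + ‖g x‖ := norm_add_le _ _
    _ ≤ K * (1 + ‖x‖) ^ m + K' * (1 + ‖x‖) ^ m' := add_le_add (hb x) (hb' x)
    _ ≤ K * (1 + ‖x‖) ^ (m + m') + K' * (1 + ‖x‖) ^ (m + m') := by
        gcongr <;> first | exact h1 | omega
    _ = _ := by ring

theorem PB.sum {ι : Type*} (s : Finset ι) {f : ι → E → F} (hf : ∀ i ∈ s, PB (f i)) :
    PB (fun x => ∑ i ∈ s, f i x) := by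
  classical
  induction s using Finset.induction_on with
  | empty => simpa using PB.const (E := E) (0 : F)
  | insert a s ha ih =>
    simp only [Finset.sum_insert ha]
    exact (hf a (by simp)).add (ih fun i hi => hf i (by simp [hi]))

theorem PB.comp {f : F → G} {g : E → F} (hf : PB f) (hg : PB g) : PB (fun x => f (g x)) := by
  obtain ⟨K, m, hK, hb⟩ := hf
  obtain ⟨K', m', hK', hb'⟩ := hg
  refine ⟨K * (1 + K') ^ m, m' * m, by positivity, fun x => ?_⟩
  have h1 : (1:ℝ) ≤ (1 + ‖x‖) ^ m' := one_le_pow₀ (by linarith [norm_nonneg x])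
  calc ‖f (g x)‖ ≤ K * (1 + ‖g x‖) ^ m := hb _
    _ ≤ K * ((1 + K') * (1 + ‖x‖) ^ m') ^ m := by
        gcongr
        have := hb' x
        nlinarith
    _ = _ := by rw [mul_pow, pow_mul]; ring

theorem PB.mulnorm {f : E → F} {g : E → G} (hf : PB f) (hg : PB g) :
    PB (fun x => ‖f x‖ * ‖g x‖) := by
  obtain ⟨K, m, hK, hb⟩ := hf
  obtain ⟨K', m', hK', hb'⟩ := hg
  refine ⟨K * K', m + m', by positivity, fun x => ?_⟩
  rw [norm_mul, norm_norm, norm_norm]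
  calc ‖f x‖ * ‖g x‖ ≤ (K * (1 + ‖x‖) ^ m) * (K' * (1 + ‖x‖) ^ m') := by
        gcongr
        · exact hb x
        · exact hb' x
    _ = _ := by ring

variable [NormedSpace ℝ E] [NormedSpace ℝ F] [NormedSpace ℝ G]

theorem PB.clm (L : E →L[ℝ] F) : PB (fun x => L x) := by
  refine ⟨‖L‖, 1, norm_nonneg _, fun x => (L.le_opNorm x).trans ?_⟩
  gcongr
  simp

/-- `C¹` with polynomially bounded value and derivative. -/
def PG (f : E → F) : Prop := ContDiff ℝ 1 f ∧ PB f ∧ PB (fderiv ℝ f)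

theorem PG.diff {f : E → F} (hf : PG f) : Differentiable ℝ f := hf.1.differentiable (by simp)

theorem PG.const_smul {f : E → F} (hf : PG f) (c : ℝ) : PG (fun x => c • f x) := by
  refine ⟨hf.1.const_smul c, (PB.mulnorm (PB.const c) hf.2.1).mono fun x => ?_,
    (PB.mulnorm (PB.const c) hf.2.2).mono fun x => ?_⟩
  · rw [norm_smul]; simp
  · rw [fderiv_fun_const_smul (hf.diff x), norm_smul]; simp

theorem PG.add {f g : E → F} (hf : PG f) (hg : PG g) : PG (fun x => f x + g x) := by
  refine ⟨hf.1.add hg.1, hf.2.1.add hg.2.1, (hf.2.2.add hg.2.2).mono fun x => ?_⟩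
  rw [fderiv_fun_add (hf.diff x) (hg.diff x)]

theorem PG.zero : PG (fun _ : E => (0 : F)) := by
  refine ⟨contDiff_const, PB.const _, ?_⟩
  simpa using (PB.const (E := E) (0 : E →L[ℝ] F)).mono (f := fderiv ℝ (fun _ : E => (0:F)))
    (by simp)

theorem PG.sum {ι : Type*} (s : Finset ι) {f : ι → E → F} (hf : ∀ i ∈ s, PG (f i)) :
    PG (fun x => ∑ i ∈ s, f i x) := by
  classical
  induction s using Finset.induction_on with
  | empty => simpa using PG.zero
  | insert a s ha ih =>
    simp only [Finset.sum_insert ha]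
    exact (hf a (by simp)).add (ih fun i hi => hf i (by simp [hi]))

theorem PG.comp_affine {f : F → G} (hf : PG f) (L : E →L[ℝ] F) (c : F) :
    PG (fun x => f (L x + c)) := by
  have hg : PB (fun x => L x + c) := (PB.clm L).add (PB.const c)
  refine ⟨hf.1.comp (L.contDiff.add contDiff_const), hf.2.1.comp hg,
    (PB.mulnorm (hf.2.2.comp hg) (PB.const L)).mono fun x => ?_⟩
  have : HasFDerivAt (fun x => f (L x + c)) ((fderiv ℝ f (L x + c)).comp L) x :=
    (hf.diff _).hasFDerivAt.comp x (L.hasFDerivAt.add_const c)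
  rw [this.fderiv]
  refine (ContinuousLinearMap.opNorm_comp_le _ _).trans ?_
  simp
end

section
variable {d : ℕ}
local notation "Edd" => EuclideanSpace ℝ (Fin d)

theorem PG_gradient {V : Edd → ℝ} (hV : ContDiff ℝ 2 V)
    (h : ∃ (K : ℝ) (m : ℕ), 0 < K ∧ ∀ (k : ℕ), 1 ≤ k → k ≤ 2 → ∀ x,
      ‖iteratedFDeriv ℝ k V x‖ ≤ K * (1 + ‖x‖) ^ m) : PG (gradient V) := by
  obtain ⟨K, m, hK, hb⟩ := h
  have hd : ContDiff ℝ 1 (fderiv ℝ V) := hV.fderiv_right (by norm_num)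
  let T := (InnerProductSpace.toDual ℝ Edd).symm
  have e : gradient V = fun x => T (fderiv ℝ V x) := rfl
  refine ⟨?_, ⟨K, m, hK.le, fun x => ?_⟩, ⟨K, m, hK.le, fun x => ?_⟩⟩
  · rw [e]; exact T.contDiff.comp hd
  · rw [e]; simp only [LinearIsometryEquiv.norm_map]
    rw [← norm_iteratedFDeriv_one]; exact hb 1 le_rfl (by norm_num) x
  · rw [e]
    have : ‖fderiv ℝ (fun x => T (fderiv ℝ V x)) x‖ = ‖fderiv ℝ (fderiv ℝ V) x‖ := by
      have h1 := T.comp_fderiv (f := fderiv ℝ V) (x := x)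
      have h2 : (fun x => T (fderiv ℝ V x)) = T ∘ fderiv ℝ V := rfl
      rw [h2, h1]
      exact LinearIsometry.norm_toContinuousLinearMap_comp T.toLinearIsometry
    rw [this, ← norm_iteratedFDeriv_one, norm_iteratedFDeriv_fderiv]
    exact hb 2 (by norm_num) le_rfl x

end
end LM

namespace LM
section
variable {d : ℕ}
local notation "Edd" => EuclideanSpace ℝ (Fin d)

theorem vdiv_const_smul (c : ℝ) {F : Edd → Edd} {x : Edd} (hF : DifferentiableAt ℝ F x) :
    vdiv (fun y => c • F y) x = c * vdiv F x := by
  simp only [vdiv, fderiv_fun_const_smul hF, smul_apply, real_inner_smul_left,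
    Finset.mul_sum]

theorem vdiv_sum {ι : Type*} (s : Finset ι) {F : ι → Edd → Edd} {x : Edd}
    (hF : ∀ i ∈ s, DifferentiableAt ℝ (F i) x) :
    vdiv (fun y => ∑ i ∈ s, F i y) x = ∑ i ∈ s, vdiv (F i) x := by
  simp only [vdiv, fderiv_fun_sum hF, sum_apply, sum_inner]
  rw [Finset.sum_comm]

theorem lap_const_mul (c : ℝ) (ρ : SchwartzMap Edd ℝ) (x : Edd) :
    lap (fun y => c * ρ y) x = c * lap (fun y => ρ y) x := by
  simp only [lap, Finset.mul_sum]
  refine Finset.sum_congr rfl fun i _ => ?_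
  have h1 : ∀ y, fderiv ℝ (fun y => c * ρ y) y = c • fderiv ℝ ρ y := fun y =>
    fderiv_const_mul (ρ.differentiableAt) c
  have h2 : Differentiable ℝ (fun y => fderiv ℝ ρ y (EuclideanSpace.single i 1)) :=
    fun y => ((ρ.smooth 2).fderiv_right (m := 1) (by norm_num)).differentiable (by simp) y
      |>.clm_apply (differentiableAt_const _)
  simp only [h1, smul_apply, smul_eq_mul]
  rw [fderiv_const_mul (h2 x)]
  rfl

/-- Integral of a directional derivative vanishes. -/
theorem integral_fderiv_zero {E F : Type*} [NormedAddCommGroup E] [NormedSpace ℝ E]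
    [FiniteDimensional ℝ E] [MeasurableSpace E] [BorelSpace E] (μ : Measure E)
    [μ.IsAddHaarMeasure] [NormedAddCommGroup F] [NormedSpace ℝ F]
    {f : E → F} (v : E) (hf : Differentiable ℝ f) (hi : Integrable f μ)
    (hi' : Integrable (fun x => fderiv ℝ f x v) μ) : ∫ x, fderiv ℝ f x v ∂μ = 0 := by
  have := integral_smul_fderiv_eq_neg_fderiv_smul_of_integrable (μ := μ)
    (f := fun _ : E => (1:ℝ)) (g := f) (v := v) (by simp) (by simpa using hi')
    (by simpa using hi) (fun x _ => differentiableAt_const _) (fun x _ => hf x)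
  simpa using this

theorem lap_eq (ρ : SchwartzMap Edd ℝ) : ∃ s : Fin d → SchwartzMap Edd ℝ,
    ∀ x, lap (fun y => ρ y) x = ∑ i, fderiv ℝ (s i) x (EuclideanSpace.single i 1) := by
  refine ⟨fun i => LineDeriv.lineDerivOp (EuclideanSpace.single i (1:ℝ)) ρ, fun x => ?_⟩
  rfl

theorem schwartz_fderiv_integrable (s : SchwartzMap Edd ℝ) (v : Edd) :
    Integrable (fun x => fderiv ℝ s x v) :=
  (LineDeriv.lineDerivOp v s).integrable

theorem lap_integrable (ρ : SchwartzMap Edd ℝ) : Integrable (fun x => lap (fun y => ρ y) x) := by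
  obtain ⟨s, hs⟩ := lap_eq ρ
  simp only [hs]
  exact integrable_finsetSum _ fun i _ => schwartz_fderiv_integrable _ _

theorem lap_integral (ρ : SchwartzMap Edd ℝ) : ∫ x, lap (fun y => ρ y) x = 0 := by
  obtain ⟨s, hs⟩ := lap_eq ρ
  simp only [hs]
  rw [integral_finsetSum _ fun i _ => schwartz_fderiv_integrable _ _]
  exact Finset.sum_eq_zero fun i _ => integral_fderiv_zero _ _ (s i).differentiable
    (s i).integrable (schwartz_fderiv_integrable _ _)

/-- dominating density -/
noncomputable def q (ρ : SchwartzMap Edd ℝ) (z : Edd) : ℝ := ‖ρ z‖ + ‖fderiv ℝ ρ z‖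

theorem q_nonneg (ρ : SchwartzMap Edd ℝ) (z : Edd) : 0 ≤ q ρ z := by unfold q; positivity

theorem schwartz_int {F : Type*} [NormedAddCommGroup F] [NormedSpace ℝ F]
    (s : SchwartzMap Edd F) (m : ℕ) :
    Integrable (fun z => (1 + ‖z‖) ^ m * ‖s z‖) := by
  have : ∀ z : Edd, (1 + ‖z‖) ^ m * ‖s z‖ =
      ∑ k ∈ Finset.range (m + 1), (m.choose k : ℝ) * (‖z‖ ^ k * ‖s z‖) := by
    intro z
    rw [add_comm, add_pow, Finset.sum_mul]
    refine Finset.sum_congr rfl fun k _ => ?_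
    simp; ring
  simp only [this]
  exact integrable_finsetSum _ fun k _ => (s.integrable_pow_mul _ k).const_mul _

theorem q_int (ρ : SchwartzMap Edd ℝ) (m : ℕ) :
    Integrable (fun z => (1 + ‖z‖) ^ m * q ρ z) := by
  have := (schwartz_int ρ m).add (schwartz_int (SchwartzMap.fderivCLM ℝ Edd ℝ ρ) m)
  refine this.congr (Filter.Eventually.of_forall fun z => ?_)
  simp [q, mul_add]

theorem int_bound {n : ℕ} {F : Type*} [NormedAddCommGroup F] (ρ : SchwartzMap Edd ℝ)
    {f : (Fin n → Edd) → F} (hf : Continuous f) {g : (Fin n → Edd) → ℝ} (hg : PB g)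
    (hb : ∀ x, ‖f x‖ ≤ ‖g x‖ * ∏ i, q ρ (x i)) : Integrable f := by
  obtain ⟨K, m, hK, hK'⟩ := hg
  have hIntg : Integrable (fun x : Fin n → Edd => K * ∏ i, ((1 + ‖x i‖) ^ m * q ρ (x i))) :=
    (Integrable.fintype_prod (f := fun (_ : Fin n) (z : Edd) => (1 + ‖z‖) ^ m * q ρ z)
      fun _ => q_int ρ m).const_mul K
  refine hIntg.mono' hf.aestronglyMeasurable (Filter.Eventually.of_forall fun x => ?_)
  refine (hb x).trans ?_
  have hP : 0 ≤ ∏ i, q ρ (x i) := Finset.prod_nonneg fun i _ => q_nonneg ρ _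
  have h1 : 1 + ‖x‖ ≤ ∏ i, (1 + ‖x i‖) := by
    have hsum : ∀ s : Finset (Fin n), 1 + ∑ i ∈ s, ‖x i‖ ≤ ∏ i ∈ s, (1 + ‖x i‖) := by
      intro s
      induction s using Finset.induction_on with
      | empty => simp
      | insert a s ha ih =>
        rw [Finset.sum_insert ha, Finset.prod_insert ha]
        have h0 : 0 ≤ ∑ i ∈ s, ‖x i‖ := Finset.sum_nonneg fun _ _ => norm_nonneg _
        nlinarith [norm_nonneg (x a)]
    have : ‖x‖ ≤ ∑ i, ‖x i‖ :=
      (pi_norm_le_iff_of_nonneg (Finset.sum_nonneg fun _ _ => norm_nonneg _)).2 fun i =>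
        Finset.single_le_sum (f := fun i => ‖x i‖) (fun _ _ => norm_nonneg _) (Finset.mem_univ i)
    linarith [hsum Finset.univ]
  calc ‖g x‖ * ∏ i, q ρ (x i) ≤ (K * (1 + ‖x‖) ^ m) * ∏ i, q ρ (x i) := by gcongr; exact hK' x
    _ ≤ (K * (∏ i, (1 + ‖x i‖)) ^ m) * ∏ i, q ρ (x i) := by gcongr
    _ = _ := by rw [Finset.prod_mul_distrib, Finset.prod_pow]; ring

theorem hasFDerivAt_prod {n : ℕ} (ρ : SchwartzMap Edd ℝ) (x : Fin n → Edd) :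
    HasFDerivAt (fun x : Fin n → Edd => ∏ i, ρ (x i))
      (∑ i, (∏ k ∈ Finset.univ.erase i, ρ (x k)) •
        (fderiv ℝ ρ (x i)).comp (ContinuousLinearMap.proj i)) x :=
  HasFDerivAt.finsetProd fun i _ =>
    (ρ.differentiableAt (x := x i)).hasFDerivAt.comp x (hasFDerivAt_apply i x)

theorem contDiff_prod {n : ℕ} (ρ : SchwartzMap Edd ℝ) :
    ContDiff ℝ 1 (fun x : Fin n → Edd => ∏ i, ρ (x i)) :=
  _root_.contDiff_prod fun i _ => (ρ.smooth 1).comp (contDiff_apply ℝ Edd i)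

theorem fderiv_prod_bound {n : ℕ} (ρ : SchwartzMap Edd ℝ) (x : Fin n → Edd) :
    ‖fderiv ℝ (fun x : Fin n → Edd => ∏ i, ρ (x i)) x‖ ≤ n * ∏ i, q ρ (x i) := by
  rw [(hasFDerivAt_prod ρ x).fderiv]
  refine (norm_sum_le _ _).trans ?_
  have : ∀ i ∈ Finset.univ, ‖(∏ k ∈ Finset.univ.erase i, ρ (x k)) •
        (fderiv ℝ ρ (x i)).comp (ContinuousLinearMap.proj (R := ℝ) (φ := fun _ : Fin n => Edd) i)‖
        ≤ ∏ i, q ρ (x i) := by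
    intro i _
    rw [norm_smul, ← Finset.mul_prod_erase _ _ (Finset.mem_univ i), mul_comm]
    have hp : ‖ContinuousLinearMap.proj (R := ℝ) (φ := fun _ : Fin n => Edd) i‖ ≤ 1 :=
      ContinuousLinearMap.opNorm_le_bound _ zero_le_one fun y => by
        simpa using norm_le_pi_norm y i
    refine mul_le_mul ?_ ?_ (norm_nonneg _) (q_nonneg _ _)
    · refine (ContinuousLinearMap.opNorm_comp_le _ _).trans ?_
      calc _ ≤ ‖fderiv ℝ ρ (x i)‖ * 1 := by gcongr
        _ ≤ _ := by unfold q; linarith [norm_nonneg (ρ (x i))]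
    · rw [norm_prod]
      exact Finset.prod_le_prod (fun _ _ => norm_nonneg _) fun k _ => by
        unfold q; linarith [norm_nonneg (fderiv ℝ ρ (x k))]
  refine (Finset.sum_le_sum this).trans ?_
  simp

/-- The key vanishing lemma. -/
theorem vanish {n : ℕ} (ρ : SchwartzMap Edd ℝ) (j : Fin n) {F : (Fin n → Edd) → Edd}
    (hF : PG F) :
    Integrable (fun x : Fin n → Edd =>
      vdiv (fun y => (∏ i, ρ (Function.update x j y i)) • F (Function.update x j y)) (x j)) ∧
    ∫ x : Fin n → Edd,
      vdiv (fun y => (∏ i, ρ (Function.update x j y i)) • F (Function.update x j y)) (x j) = 0 := by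
  set R : (Fin n → Edd) → ℝ := fun x => ∏ i, ρ (x i) with hR
  set Φ : (Fin n → Edd) → Edd := fun x => R x • F x with hΦ
  have hRc : ContDiff ℝ 1 R := contDiff_prod ρ
  have hc : ContDiff ℝ 1 Φ := hRc.smul hF.1
  have hd : Differentiable ℝ Φ := hc.differentiable (by simp)
  have hRb : ∀ x, ‖R x‖ ≤ ∏ i, q ρ (x i) := fun x => by
    rw [hR, norm_prod]
    exact Finset.prod_le_prod (fun _ _ => norm_nonneg _) fun k _ => by
        unfold q; linarith [norm_nonneg (fderiv ℝ ρ (x k))]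
  have key : ∀ x : Fin n → Edd,
      vdiv (fun y => (∏ i, ρ (Function.update x j y i)) • F (Function.update x j y)) (x j)
      = ∑ i, ⟪EuclideanSpace.single i (1:ℝ),
          fderiv ℝ Φ x (Pi.single j (EuclideanSpace.single i 1))⟫ := by
    intro x
    have h1 : HasFDerivAt (fun y => Φ (Function.update x j y))
        ((fderiv ℝ Φ x).comp (.pi (Pi.single j (.id ℝ Edd)))) (x j) := by
      have h2 := hasFDerivAt_update (𝕜 := ℝ) x (i := j) (x j)
      have h3 : HasFDerivAt Φ (fderiv ℝ Φ x) (Function.update x j (x j)) := by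
        rw [Function.update_eq_self]; exact (hd x).hasFDerivAt
      exact h3.comp (x j) h2
    unfold vdiv
    refine Finset.sum_congr rfl fun i _ => ?_
    rw [real_inner_comm]
    have h4 : fderiv ℝ (fun y => (∏ i, ρ (Function.update x j y i)) • F (Function.update x j y))
      (x j) = _ := h1.fderiv
    rw [h4, ContinuousLinearMap.comp_apply]
    congr 2
    ext k l
    rcases eq_or_ne k j with rfl | h
    · simp
    · simp [h]
  have hIntg : Integrable Φ := by
    refine int_bound ρ hc.continuous (g := fun x => ‖F x‖) (hF.2.1.mono fun x => by simp) fun x => ?_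
    rw [hΦ, norm_smul, mul_comm, norm_norm]
    gcongr
    exact hRb x
  have hIntg' : ∀ v, Integrable (fun x => fderiv ℝ Φ x v) := by
    intro v
    have hcd : Continuous (fun x => fderiv ℝ Φ x v) :=
      (hc.continuous_fderiv (by simp)).clm_apply continuous_const
    have hG : PB (fun x => ‖v‖ * (‖fderiv ℝ F x‖ + n * ‖F x‖)) := by
      have a1 := PB.mulnorm (PB.const (E := Fin n → Edd) (n:ℝ)) hF.2.1
      have a2 : PB fun x => ‖fderiv ℝ F x‖ := hF.2.2.mono fun x => by simp
      refine (PB.mulnorm (PB.const (E := Fin n → Edd) v) (a2.add a1)).mono fun x => ?_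
      simp
    refine int_bound ρ hcd hG fun x => ?_
    have h5 : fderiv ℝ Φ x = R x • fderiv ℝ F x + (fderiv ℝ R x).smulRight (F x) :=
      fderiv_fun_smul (hRc.differentiable (by simp) x) (hF.diff x)
    rw [Real.norm_of_nonneg (by positivity)]
    have hP : 0 ≤ ∏ i, q ρ (x i) := Finset.prod_nonneg fun i _ => q_nonneg ρ _
    calc ‖fderiv ℝ Φ x v‖ ≤ ‖fderiv ℝ Φ x‖ * ‖v‖ := ContinuousLinearMap.le_opNorm _ _
      _ ≤ ((∏ i, q ρ (x i)) * ‖fderiv ℝ F x‖ + (n * ∏ i, q ρ (x i)) * ‖F x‖) * ‖v‖ := by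
        gcongr
        rw [h5]
        refine (norm_add_le _ _).trans (add_le_add ?_ ?_)
        · rw [norm_smul]; gcongr; exact hRb x
        · rw [ContinuousLinearMap.norm_smulRight_apply]
          gcongr
          exact fderiv_prod_bound ρ x
      _ = _ := by ring
  simp only [key]
  constructor
  · exact integrable_finsetSum _ fun i _ => (hIntg' _).const_inner _
  · rw [integral_finsetSum _ fun i _ => (hIntg' _).const_inner _]
    refine Finset.sum_eq_zero fun i _ => ?_
    rw [integral_inner (hIntg' _), integral_fderiv_zero _ _ hd hIntg (hIntg' _), inner_zero_right]

end
end LM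

namespace LM
section
variable {d : ℕ}
local notation "Edd" => EuclideanSpace ℝ (Fin d)

theorem prod_one {n : ℕ} (ρ : SchwartzMap Edd ℝ) (hρ : ∫ y, ρ y = 1) (k : Fin n) {h : Edd → ℝ}
    (hh : Integrable h) :
    Integrable (fun x : Fin n → Edd => (∏ i ∈ Finset.univ.erase k, ρ (x i)) * h (x k)) ∧
    ∫ x : Fin n → Edd, (∏ i ∈ Finset.univ.erase k, ρ (x i)) * h (x k) = ∫ z, h z := by
  classical
  let f : Fin n → Edd → ℝ := fun i => if i = k then h else ρ
  have e : ∀ x : Fin n → Edd, (∏ i ∈ Finset.univ.erase k, ρ (x i)) * h (x k) = ∏ i, f i (x i) := by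
    intro x
    rw [← Finset.prod_erase_mul _ _ (Finset.mem_univ k)]
    congr 1
    · refine Finset.prod_congr rfl fun i hi => ?_
      simp [f, Finset.ne_of_mem_erase hi]
    · simp [f]
  have hf : ∀ i, Integrable (f i) := by
    intro i
    by_cases hi : i = k
    · simpa [f, hi] using hh
    · simpa [f, hi] using ρ.integrable
  simp only [e]
  refine ⟨Integrable.fintype_prod hf, ?_⟩
  rw [integral_fintype_prod_volume_eq_prod, ← Finset.prod_erase_mul _ _ (Finset.mem_univ k)]
  rw [Finset.prod_eq_one]
  · simp [f]
  · intro i hi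
    simpa [f, Finset.ne_of_mem_erase hi] using hρ

theorem prod_all {n : ℕ} (ρ : SchwartzMap Edd ℝ) (hρ : ∫ y, ρ y = 1) :
    Integrable (fun x : Fin n → Edd => ∏ i, ρ (x i)) ∧
    ∫ x : Fin n → Edd, ∏ i, ρ (x i) = 1 := by
  refine ⟨Integrable.fintype_prod (f := fun _ : Fin n => ⇑ρ) fun _ => ρ.integrable, ?_⟩
  rw [integral_fintype_prod_volume_eq_prod (fun _ : Fin n => ⇑ρ)]
  simp [hρ]

theorem smul_PB_int {F : Type*} [NormedAddCommGroup F] [NormedSpace ℝ F]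
    (ρ : SchwartzMap Edd ℝ) {h : Edd → F} (hc : Continuous h)
    (hb : PB h) : Integrable (fun z => ρ z • h z) := by
  obtain ⟨K, m, hK, hb⟩ := hb
  refine ((schwartz_int ρ m).const_mul K).mono' (ρ.continuous.smul hc).aestronglyMeasurable
    (Filter.Eventually.of_forall fun z => ?_)
  rw [norm_smul]
  calc ‖ρ z‖ * ‖h z‖ ≤ ‖ρ z‖ * (K * (1 + ‖z‖) ^ m) := by gcongr; exact hb z
    _ = _ := by ring

theorem PB_sub {F : Type*} [NormedAddCommGroup F] {h : Edd → F} (hb : PB h) (y : Edd) :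
    PB (fun z => h (y - z)) := by
  refine hb.comp (g := fun z => y - z) ?_
  refine ((PB.const y).add (PB.clm (-ContinuousLinearMap.id ℝ Edd))).mono fun z => ?_
  simp [sub_eq_add_neg]

theorem conv_deriv (ρ : SchwartzMap Edd ℝ) {G : Edd → Edd} (hG : PG G) (x₁ : Edd) :
    HasFDerivAt (fun y => ∫ z, ρ z • G (y - z)) (∫ z, ρ z • fderiv ℝ G (x₁ - z)) x₁ := by
  have hGc := hG.1.continuous
  have hG'c : Continuous (fderiv ℝ G) := hG.1.continuous_fderiv (by simp)
  obtain ⟨K, m, hK, hb⟩ := hG.2.2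
  refine hasFDerivAt_integral_of_dominated_of_fderiv_le
    (F := fun y z => ρ z • G (y - z)) (F' := fun y z => ρ z • fderiv ℝ G (y - z))
    (s := Metric.ball x₁ 1)
    (bound := fun z => (K * (2 + ‖x₁‖) ^ m) * ((1 + ‖z‖) ^ m * ‖ρ z‖))
    (Metric.ball_mem_nhds _ one_pos) ?_ ?_ ?_ ?_ ?_ ?_
  · exact Filter.Eventually.of_forall fun y =>
      (ρ.continuous.smul (hGc.comp (continuous_const.sub continuous_id))).aestronglyMeasurable
  · exact smul_PB_int ρ (hGc.comp (continuous_const.sub continuous_id)) (PB_sub hG.2.1 x₁)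
  · exact (ρ.continuous.smul (hG'c.comp (continuous_const.sub continuous_id))).aestronglyMeasurable
  · refine Filter.Eventually.of_forall fun z y hy => ?_
    rw [norm_smul]
    have hy' : ‖y‖ ≤ ‖x₁‖ + 1 := by
      have h1 := norm_sub_norm_le y x₁
      have h2 : ‖y - x₁‖ < 1 := by simpa [dist_eq_norm] using hy
      linarith
    calc ‖ρ z‖ * ‖fderiv ℝ G (y - z)‖ ≤ ‖ρ z‖ * (K * (1 + ‖y - z‖) ^ m) := by
          gcongr; exact hb _
      _ ≤ ‖ρ z‖ * (K * ((2 + ‖x₁‖) * (1 + ‖z‖)) ^ m) := by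
          gcongr
          have := norm_sub_le y z
          nlinarith [norm_nonneg z, norm_nonneg x₁]
      _ = _ := by rw [mul_pow]; ring
  · exact (schwartz_int ρ m).const_mul _
  · refine Filter.Eventually.of_forall fun z y _ => ?_
    have h1 : HasFDerivAt (fun y => G (y - z)) (fderiv ℝ G (y - z)) y := by
      have h0 := (hG.diff (y - z)).hasFDerivAt.comp y ((hasFDerivAt_id y).sub_const z)
      rw [ContinuousLinearMap.comp_id] at h0
      exact h0
    exact h1.fun_const_smul _

theorem vdiv_smul {f : Edd → ℝ} {F : Edd → Edd} {F' : Edd →L[ℝ] Edd} {x : Edd}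
    (hf : DifferentiableAt ℝ f x) (hF : HasFDerivAt F F' x) :
    vdiv (fun y => f y • F y) x = ∑ i,
      (f x * ⟪EuclideanSpace.single i (1:ℝ), F' (EuclideanSpace.single i 1)⟫
        + fderiv ℝ f x (EuclideanSpace.single i 1) * ⟪EuclideanSpace.single i (1:ℝ), F x⟫) := by
  unfold vdiv
  refine Finset.sum_congr rfl fun i _ => ?_
  rw [(hf.hasFDerivAt.fun_smul hF).fderiv, real_inner_comm]
  simp [inner_add_right, real_inner_smul_right]

theorem conv_vdiv (ρ : SchwartzMap Edd ℝ) {G : Edd → Edd} (hG : PG G) (x₁ : Edd) :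
    Integrable (fun z => ρ z * vdiv (fun y => ρ y • G (y - z)) x₁) ∧
    ∫ z, ρ z * vdiv (fun y => ρ y • G (y - z)) x₁
      = vdiv (fun y => ρ y • ∫ z, ρ z • G (y - z)) x₁ := by
  have hGc := hG.1.continuous
  have hG'c : Continuous (fderiv ℝ G) := hG.1.continuous_fderiv (by simp)
  have hc : Continuous (fun z : Edd => x₁ - z) := continuous_const.sub continuous_id
  have i1 : Integrable (fun z => ρ z • G (x₁ - z)) :=
    smul_PB_int ρ (hGc.comp hc) (PB_sub hG.2.1 x₁)
  have i2 : Integrable (fun z => ρ z • fderiv ℝ G (x₁ - z)) :=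
    smul_PB_int ρ (hG'c.comp hc) (PB_sub hG.2.2 x₁)
  have i2' : ∀ v, Integrable (fun z => (ρ z • fderiv ℝ G (x₁ - z)) v) := fun v =>
    i2.apply_continuousLinearMap v
  have key : ∀ z, ρ z * vdiv (fun y => ρ y • G (y - z)) x₁ = ∑ i,
      (ρ x₁ * ⟪EuclideanSpace.single i (1:ℝ),
          (ρ z • fderiv ℝ G (x₁ - z)) (EuclideanSpace.single i 1)⟫
        + fderiv ℝ ρ x₁ (EuclideanSpace.single i 1) *
          ⟪EuclideanSpace.single i (1:ℝ), ρ z • G (x₁ - z)⟫) := by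
    intro z
    have h1 : HasFDerivAt (fun y => G (y - z)) (fderiv ℝ G (x₁ - z)) x₁ := by
      have h0 := (hG.diff (x₁ - z)).hasFDerivAt.comp x₁ ((hasFDerivAt_id x₁).sub_const z)
      rw [ContinuousLinearMap.comp_id] at h0
      exact h0
    rw [vdiv_smul ρ.differentiableAt h1, Finset.mul_sum]
    refine Finset.sum_congr rfl fun i _ => ?_
    rw [smul_apply, real_inner_smul_right, real_inner_smul_right]
    ring
  have hA : ∀ i : Fin d, Integrable (fun z => ρ x₁ * ⟪EuclideanSpace.single i (1:ℝ),
          (ρ z • fderiv ℝ G (x₁ - z)) (EuclideanSpace.single i 1)⟫) := fun i =>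
    ((i2' _).const_inner _).const_mul _
  have hB : ∀ i : Fin d, Integrable (fun z => fderiv ℝ ρ x₁ (EuclideanSpace.single i 1) *
          ⟪EuclideanSpace.single i (1:ℝ), ρ z • G (x₁ - z)⟫) := fun i =>
    (i1.const_inner _).const_mul _
  have hAB := fun i => (hA i).fun_add (hB i)
  simp only [key]
  refine ⟨integrable_finsetSum _ fun i _ => hAB i, ?_⟩
  rw [integral_finsetSum _ fun i _ => hAB i,
    vdiv_smul ρ.differentiableAt (conv_deriv ρ hG x₁)]
  refine Finset.sum_congr rfl fun i _ => ?_
  rw [integral_add (hA i) (hB i), integral_const_mul, integral_const_mul, integral_inner (i2' _),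
    integral_inner i1, ContinuousLinearMap.integral_apply i2]

end
end LM

/-- The analytic core of Theorem 1: under the propagation-of-chaos
factorization `ρ^N(x₁,…,x_N) = Π_j ρ(x_j)`, integrating the right-hand side of the
`N`-particle Liouville equation
`C Δρ^N + Σ_j div_{x_j}(A ∇V(x_j) ρ^N) + Σ_j div_{x_j}((B/(N−1)) Σ_{k≠j} ∇W(x_j−x_k) ρ^N)`
over the last `N−1` variables yields
`C Δρ(x₁) + A div(∇V ρ)(x₁) + B div(ρ (∇W ∗ ρ))(x₁)`.
Here `(ℝ^d)^N ≅ ℝ^d × (ℝ^d)^{N−1}` (first block `x₁`, remaining blocks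
`x : Fin (N−1) → ℝ^d`), the Laplacian on `(ℝ^d)^N` is the sum of block Laplacians,
and `(∇W ∗ ρ)(x) = ∫ ∇W(x−z) ρ(z) dz`. -/
theorem liouville_marginalization
    (d N : ℕ) (hd : 1 ≤ d) (hN : 2 ≤ N)
    (A B C : ℝ) (hA : 0 < A) (hB : 0 < B) (hC : 0 < C)
    (ρ : SchwartzMap (EuclideanSpace ℝ (Fin d)) ℝ)
    (hρ_mass : ∫ y, ρ y = 1)
    (V W : EuclideanSpace ℝ (Fin d) → ℝ)
    (hV : ContDiff ℝ 2 V) (hW : ContDiff ℝ 2 W)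
    (hVgrowth : ∃ (K : ℝ) (m : ℕ), 0 < K ∧ ∀ (k : ℕ), 1 ≤ k → k ≤ 2 → ∀ x,
      ‖iteratedFDeriv ℝ k V x‖ ≤ K * (1 + ‖x‖) ^ m)
    (hWgrowth : ∃ (K : ℝ) (m : ℕ), 0 < K ∧ ∀ (k : ℕ), 1 ≤ k → k ≤ 2 → ∀ x,
      ‖iteratedFDeriv ℝ k W x‖ ≤ K * (1 + ‖x‖) ^ m)
    (x₁ : EuclideanSpace ℝ (Fin d)) :
    ∫ x : Fin (N - 1) → EuclideanSpace ℝ (Fin d),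
        (C * (lap (fun y => ρ y * ∏ i, ρ (x i)) x₁
              + ∑ j : Fin (N - 1),
                  lap (fun y => ρ x₁ * ∏ i, ρ (Function.update x j y i)) (x j))
          + (vdiv (fun y => (A * (ρ y * ∏ i, ρ (x i))) • gradient V y) x₁
              + ∑ j : Fin (N - 1),
                  vdiv (fun y =>
                    (A * (ρ x₁ * ∏ i, ρ (Function.update x j y i))) • gradient V y) (x j))
          + (vdiv (fun y =>
                ((B / ((N : ℝ) - 1)) * (ρ y * ∏ i, ρ (x i))) •
                  ∑ k, gradient W (y - x k)) x₁
              + ∑ j : Fin (N - 1),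
                  vdiv (fun y =>
                    ((B / ((N : ℝ) - 1)) * (ρ x₁ * ∏ i, ρ (Function.update x j y i))) •
                      (gradient W (y - x₁)
                        + ∑ k ∈ Finset.univ.erase j, gradient W (y - x k))) (x j)))
      = C * lap (fun y => ρ y) x₁
        + A * vdiv (fun y => ρ y • gradient V y) x₁
        + B * vdiv (fun y => ρ y • ∫ z, ρ z • gradient W (y - z)) x₁ := by
  have hcast : (N : ℝ) - 1 = ((N - 1 : ℕ) : ℝ) := by
    rw [Nat.cast_sub (by omega)]; simp
  have hn : ((N - 1 : ℕ) : ℝ) ≠ 0 := by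
    have : N - 1 ≠ 0 := by omega
    exact_mod_cast this
  rw [hcast]
  clear hcast
  generalize N - 1 = n at hn ⊢
  have hH := LM.PG_gradient hV hVgrowth
  have hG := LM.PG_gradient hW hWgrowth
  generalize gradient V = H at hH ⊢
  generalize gradient W = G at hG ⊢
  have hGs : ∀ z, Differentiable ℝ (fun y => G (y - z)) := fun z =>
    hG.diff.comp (differentiable_id.sub_const z)
  have hρd : Differentiable ℝ ρ := ρ.differentiable
  -- term 1
  have t1 : ∀ x : Fin n → EuclideanSpace ℝ (Fin d),
      lap (fun y => ρ y * ∏ i, ρ (x i)) x₁ = (∏ i, ρ (x i)) * lap (fun y => ρ y) x₁ := by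
    intro x
    rw [← LM.lap_const_mul]
    congr 1; ext y; ring
  -- term 2
  have hup : ∀ (x : Fin n → EuclideanSpace ℝ (Fin d)) (j : Fin n) y,
      ∏ i, ρ (Function.update x j y i) = (∏ i ∈ Finset.univ.erase j, ρ (x i)) * ρ y := by
    intro x j y
    rw [← Finset.prod_erase_mul _ _ (Finset.mem_univ j)]
    congr 1
    · refine Finset.prod_congr rfl fun i hi => ?_
      rw [Function.update_of_ne (Finset.ne_of_mem_erase hi)]
    · simp
  have t2 : ∀ (x : Fin n → EuclideanSpace ℝ (Fin d)) (j : Fin n),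
      lap (fun y => ρ x₁ * ∏ i, ρ (Function.update x j y i)) (x j)
      = ρ x₁ * ((∏ i ∈ Finset.univ.erase j, ρ (x i)) * lap (fun y => ρ y) (x j)) := by
    intro x j
    rw [← mul_assoc, ← LM.lap_const_mul]
    congr 1; ext y; rw [hup]; ring
  -- term 3
  have t3 : ∀ x : Fin n → EuclideanSpace ℝ (Fin d),
      vdiv (fun y => (A * (ρ y * ∏ i, ρ (x i))) • H y) x₁
      = (∏ i, ρ (x i)) * (A * vdiv (fun y => ρ y • H y) x₁) := by
    intro x
    rw [← mul_assoc, ← LM.vdiv_const_smul _ ((hρd x₁).fun_smul (hH.diff x₁))]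
    congr 1; ext1 y; rw [smul_smul]; congr 1; ring
  -- term 4
  have t4 : ∀ (x : Fin n → EuclideanSpace ℝ (Fin d)) (j : Fin n),
      vdiv (fun y => (A * (ρ x₁ * ∏ i, ρ (Function.update x j y i))) • H y) (x j)
      = vdiv (fun y => (∏ i, ρ (Function.update x j y i)) •
          (fun x : Fin n → EuclideanSpace ℝ (Fin d) => (A * ρ x₁) • H (x j))
            (Function.update x j y)) (x j) := by
    intro x j
    congr 1; ext1 y; simp only [Function.update_self]; rw [smul_smul]; congr 1; ring
  -- term 5
  have t5 : ∀ x : Fin n → EuclideanSpace ℝ (Fin d),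
      vdiv (fun y => ((B / (n : ℝ)) * (ρ y * ∏ i, ρ (x i))) • ∑ k, G (y - x k)) x₁
      = ∑ k, (B / (n : ℝ)) * ((∏ i ∈ Finset.univ.erase k, ρ (x i)) *
          (fun z => ρ z * vdiv (fun y => ρ y • G (y - z)) x₁) (x k)) := by
    intro x
    have hdk : ∀ k, DifferentiableAt ℝ (fun y => ρ y • G (y - x k)) x₁ := fun k =>
      (hρd x₁).smul (hGs _ x₁)
    have e1 : (fun y => ((B / (n : ℝ)) * (ρ y * ∏ i, ρ (x i))) • ∑ k, G (y - x k))
        = fun y => ((B / (n : ℝ)) * ∏ i, ρ (x i)) • ∑ k, ρ y • G (y - x k) := by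
      ext1 y
      rw [← Finset.smul_sum, smul_smul]; congr 1; ring
    rw [e1, LM.vdiv_const_smul _ (DifferentiableAt.fun_sum fun k _ => hdk k),
      LM.vdiv_sum _ fun k _ => hdk k, Finset.mul_sum]
    refine Finset.sum_congr rfl fun k _ => ?_
    rw [← Finset.prod_erase_mul _ _ (Finset.mem_univ k)]
    ring
  -- term 6
  have t6 : ∀ (x : Fin n → EuclideanSpace ℝ (Fin d)) (j : Fin n),
      vdiv (fun y => ((B / (n : ℝ)) * (ρ x₁ * ∏ i, ρ (Function.update x j y i))) •
          (G (y - x₁) + ∑ k ∈ Finset.univ.erase j, G (y - x k))) (x j)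
      = vdiv (fun y => (∏ i, ρ (Function.update x j y i)) •
          (fun x : Fin n → EuclideanSpace ℝ (Fin d) => ((B / (n : ℝ)) * ρ x₁) •
            (G (x j - x₁) + ∑ k ∈ Finset.univ.erase j, G (x j - x k)))
            (Function.update x j y)) (x j) := by
    intro x j
    congr 1; ext1 y; simp only [Function.update_self]; rw [smul_smul]
    congr 1
    · ring
    · congr 1
      refine Finset.sum_congr rfl fun k hk => ?_
      rw [Function.update_of_ne (Finset.ne_of_mem_erase hk)]
  have pg4 : ∀ j : Fin n, LM.PG (fun x : Fin n → EuclideanSpace ℝ (Fin d) =>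
      (A * ρ x₁) • H (x j)) := by
    intro j
    have := hH.comp_affine
      (ContinuousLinearMap.proj (R := ℝ) (φ := fun _ : Fin n => EuclideanSpace ℝ (Fin d)) j) 0
    simp only [ContinuousLinearMap.proj_apply, add_zero] at this
    exact this.const_smul _
  have pg6 : ∀ j : Fin n, LM.PG (fun x : Fin n → EuclideanSpace ℝ (Fin d) =>
      ((B / (n : ℝ)) * ρ x₁) •
            (G (x j - x₁) + ∑ k ∈ Finset.univ.erase j, G (x j - x k))) := by
    intro j
    let pr := fun j : Fin n =>
      ContinuousLinearMap.proj (R := ℝ) (φ := fun _ : Fin n => EuclideanSpace ℝ (Fin d)) j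
    refine LM.PG.const_smul (LM.PG.add ?_ (LM.PG.sum _ fun k _ => ?_)) _
    · have := hG.comp_affine (pr j) (-x₁)
      simpa [pr, ← sub_eq_add_neg] using this
    · have := hG.comp_affine (pr j - pr k) 0
      simpa [pr] using this
  obtain ⟨iP, jP⟩ := LM.prod_all (n := n) ρ hρ_mass
  have P2 := fun j : Fin n => LM.prod_one ρ hρ_mass j (LM.lap_integrable ρ)
  have P4 := fun j : Fin n => LM.vanish ρ j (pg4 j)
  have cv := LM.conv_vdiv ρ hG x₁
  have P5 := fun j : Fin n => LM.prod_one ρ hρ_mass j cv.1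
  have P6 := fun j : Fin n => LM.vanish ρ j (pg6 j)
  simp only [t1, t2, t3, t4, t5, t6]
  have I1 := iP.mul_const (lap (fun y => ρ y) x₁)
  have I2 := integrable_finsetSum Finset.univ fun j _ => (P2 j).1.const_mul (ρ x₁)
  have I3 := iP.mul_const (A * vdiv (fun y => ρ y • H y) x₁)
  have I4 := integrable_finsetSum Finset.univ fun j _ => (P4 j).1
  have I5 := integrable_finsetSum Finset.univ fun j _ => (P5 j).1.const_mul (B / (n:ℝ))
  have I6 := integrable_finsetSum Finset.univ fun j _ => (P6 j).1
  rw [integral_add (((I1.fun_add I2).const_mul C).fun_add (I3.fun_add I4)) (I5.fun_add I6),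
    integral_add ((I1.fun_add I2).const_mul C) (I3.fun_add I4), integral_const_mul,
    integral_add I1 I2, integral_add I3 I4, integral_add I5 I6,
    integral_mul_const, integral_mul_const, jP,
    integral_finsetSum _ fun j _ => (P2 j).1.const_mul (ρ x₁),
    integral_finsetSum _ fun j _ => (P4 j).1,
    integral_finsetSum _ fun j _ => (P5 j).1.const_mul (B / (n:ℝ)),
    integral_finsetSum _ fun j _ => (P6 j).1]
  have z2 : ∀ j : Fin n, ∫ x : Fin n → EuclideanSpace ℝ (Fin d),
      ρ x₁ * ((∏ i ∈ Finset.univ.erase j, ρ (x i)) * lap (fun y => ρ y) (x j)) = 0 := by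
    intro j
    rw [integral_const_mul, (P2 j).2, LM.lap_integral, mul_zero]
  rw [Finset.sum_eq_zero fun j _ => z2 j, Finset.sum_eq_zero fun j _ => (P4 j).2,
    Finset.sum_eq_zero fun j _ => (P6 j).2]
  have z5 := fun j : Fin n => (integral_const_mul (μ := volume) (B / (n:ℝ)) _).trans
    (congrArg (fun t => B / (n:ℝ) * t) ((P5 j).2.trans cv.2))
  rw [Finset.sum_congr rfl fun j _ => z5 j]
  simp only [Finset.sum_const, Finset.card_univ, Fintype.card_fin, nsmul_eq_mul]
  field_simp
  ring
end

section
/- Let a ∈ ℝ, β > 0, τ > 0, let W'(y) = a y and ρ(x) = β exp(−τ x²), and define (W' ∗ ρ)(x) = ∫_{−∞}^{∞} a y · β exp(−τ (x − y)²) dy. Then ρ'(x) + (W' ∗ ρ)(x) ρ(x) = 0 for all x ∈ ℝ if and only if a β = 2 τ^{3/2} / √π. In particular, under this relation, ρ is a stationary state of the zero-food equation ρ_t = Δρ + ∂_x((W' ∗ ρ) ρ), i.e. ρ''(x) + ∂_x( (W' ∗ ρ)(x) ρ(x) ) = 0 for all x. -/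
theorem conv_gauss_aux (a β τ : ℝ) (hτ : 0 < τ) (x : ℝ) :
    (∫ y : ℝ, (a * y) * (β * Real.exp (-τ * (x - y) ^ 2)))
      = a * β * x * Real.sqrt (Real.pi / τ) := by
  have h1 := MeasureTheory.integral_sub_left_eq_self
    (fun u : ℝ => (a * (x - u)) * (β * Real.exp (-τ * u ^ 2))) MeasureTheory.volume x
  simp only [sub_sub_cancel] at h1
  rw [h1]
  have hodd : (∫ u : ℝ, u * Real.exp (-τ * u ^ 2)) = 0 := by
    have h2 := MeasureTheory.integral_neg_eq_self
      (fun u : ℝ => u * Real.exp (-τ * u ^ 2)) MeasureTheory.volume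
    have h4 : (fun u : ℝ => -u * Real.exp (-τ * (-u) ^ 2))
        = fun u => -(u * Real.exp (-τ * u ^ 2)) := by
      funext u; rw [neg_sq]; ring
    rw [h4] at h2
    rw [MeasureTheory.integral_neg] at h2
    linarith
  have h3 : (fun u : ℝ => (a * (x - u)) * (β * Real.exp (-τ * u ^ 2)))
      = fun u => (a * β * x) * Real.exp (-τ * u ^ 2)
          - (a * β) * (u * Real.exp (-τ * u ^ 2)) := by
    funext u; ring
  rw [h3, MeasureTheory.integral_sub ((integrable_exp_neg_mul_sq hτ).const_mul _)
    ((integrable_mul_exp_neg_mul_sq hτ).const_mul _), MeasureTheory.integral_const_mul,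
    MeasureTheory.integral_const_mul, hodd, integral_gaussian]
  ring

theorem deriv_gauss_aux (β τ x : ℝ) :
    deriv (fun z => β * Real.exp (-τ * z ^ 2)) x
      = -2 * τ * x * (β * Real.exp (-τ * x ^ 2)) := by
  have h : HasDerivAt (fun z : ℝ => β * Real.exp (-τ * z ^ 2))
      (β * (Real.exp (-τ * x ^ 2) * (-τ * ((2 : ℕ) * x ^ (2 - 1))))) x :=
    (((hasDerivAt_pow 2 x).const_mul (-τ)).exp).const_mul β
  rw [h.deriv]
  push_cast
  ring

theorem rel_gauss_aux (c τ : ℝ) (hτ : 0 < τ) :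
    c * Real.sqrt (Real.pi / τ) = 2 * τ
      ↔ c = 2 * τ ^ ((3 : ℝ) / 2) / Real.sqrt Real.pi := by
  have hp : 0 < Real.sqrt Real.pi := Real.sqrt_pos.2 Real.pi_pos
  have ht : 0 < Real.sqrt τ := Real.sqrt_pos.2 hτ
  have h32 : τ ^ ((3 : ℝ) / 2) = τ * Real.sqrt τ := by
    rw [show (3 : ℝ) / 2 = 1 + 1 / 2 by norm_num, Real.rpow_add hτ, Real.rpow_one,
      Real.sqrt_eq_rpow]
  rw [h32, Real.sqrt_div Real.pi_pos.le, eq_div_iff hp.ne', ← mul_div_assoc,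
    div_eq_iff ht.ne', mul_assoc 2 τ]

/-- For the quadratic kernel `W'(y) = a y` and the Gaussian
`ρ(x) = β exp(−τ x²)`, with `(W' ∗ ρ)(x) = ∫ a y · β exp(−τ(x−y)²) dy`, one has
`ρ' + (W' ∗ ρ) ρ = 0` everywhere iff `a β = 2 τ^{3/2} / √π`; and under this relation
`ρ` is a stationary state of the zero-food equation, i.e.
`ρ'' + (((W' ∗ ρ) ρ))' = 0` everywhere. -/
theorem gaussian_stationary_state (a β τ : ℝ) (hβ : 0 < β) (hτ : 0 < τ) :
    ((∀ x : ℝ,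
        deriv (fun z => β * Real.exp (-τ * z ^ 2)) x
          + (∫ y : ℝ, (a * y) * (β * Real.exp (-τ * (x - y) ^ 2)))
              * (β * Real.exp (-τ * x ^ 2)) = 0)
      ↔ a * β = 2 * τ ^ ((3 : ℝ) / 2) / Real.sqrt Real.pi)
    ∧ (a * β = 2 * τ ^ ((3 : ℝ) / 2) / Real.sqrt Real.pi →
        ∀ x : ℝ,
          deriv (deriv (fun z => β * Real.exp (-τ * z ^ 2))) x
            + deriv (fun z =>
                (∫ y : ℝ, (a * y) * (β * Real.exp (-τ * (z - y) ^ 2)))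
                  * (β * Real.exp (-τ * z ^ 2))) x = 0) := by
  simp only [conv_gauss_aux a β τ hτ]
  have key : a * β = 2 * τ ^ ((3 : ℝ) / 2) / Real.sqrt Real.pi → ∀ x : ℝ,
      deriv (fun z => β * Real.exp (-τ * z ^ 2)) x
        + (a * β * x * Real.sqrt (Real.pi / τ)) * (β * Real.exp (-τ * x ^ 2)) = 0 := by
    intro h x
    have h' := (rel_gauss_aux (a * β) τ hτ).2 h
    rw [deriv_gauss_aux]
    linear_combination x * (β * Real.exp (-τ * x ^ 2)) * h'
  refine ⟨⟨fun h => ?_, key⟩, fun h x => ?_⟩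
  · rw [← rel_gauss_aux _ _ hτ]
    have h1 := h 1
    rw [deriv_gauss_aux] at h1
    have hpos : β * Real.exp (-τ * 1 ^ 2) ≠ 0 := (mul_pos hβ (Real.exp_pos _)).ne'
    apply mul_right_cancel₀ hpos
    linear_combination h1
  · have h2 : (fun z => (a * β * z * Real.sqrt (Real.pi / τ)) * (β * Real.exp (-τ * z ^ 2)))
        = fun z => - deriv (fun z => β * Real.exp (-τ * z ^ 2)) z := by
      funext z
      linarith [key h z]
    rw [h2, deriv.fun_neg]
    ring
end

section
/- Let τ > 0, c ∈ ℝ, and let f : ℝ → ℝ be continuous with at most polynomial growth, i.e. |f(y)| ≤ K(1 + |y|)^m for some K > 0 and m ∈ ℕ. If ∫_{−∞}^{∞} f(y) exp(−τ (y − x)²) dy = c x for all x ∈ ℝ, then f(y) = c √(τ/π) · y for all y ∈ ℝ. -/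
open MeasureTheory ProbabilityTheory in
lemma gcl_integrable (τ : ℝ) (hτ : 0 < τ) (g : ℝ → ℝ) (hg : Continuous g) (C : ℝ)
    (hC : ∀ y, |g y| ≤ C * Real.exp |y|) (t : ℝ) :
    Integrable (fun y : ℝ => g y * Real.exp (-τ * y ^ 2 + t * y)) := by
  have hC0 : 0 ≤ C := by
    have := (abs_nonneg _).trans (hC 0)
    simpa using this
  have hb := (integrable_exp_neg_mul_sq (half_pos hτ)).const_mul
    (C * Real.exp ((1 + |t|) ^ 2 / (2 * τ)))
  refine hb.mono' (by fun_prop) (Filter.Eventually.of_forall fun y => ?_)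
  rw [Real.norm_eq_abs, abs_mul, Real.abs_exp]
  calc |g y| * Real.exp (-τ * y ^ 2 + t * y)
      ≤ C * Real.exp |y| * Real.exp (-τ * y ^ 2 + t * y) := by
        gcongr; exact hC y
    _ = C * Real.exp (|y| + (-τ * y ^ 2 + t * y)) := by rw [mul_assoc, ← Real.exp_add]
    _ ≤ C * Real.exp ((1 + |t|) ^ 2 / (2 * τ) + -(τ / 2) * y ^ 2) := by
        refine mul_le_mul_of_nonneg_left (Real.exp_le_exp.2 ?_) hC0
        have h1 : t * y ≤ |t| * |y| := by rw [← abs_mul]; exact le_abs_self _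
        have h2 : y ^ 2 = |y| ^ 2 := (sq_abs y).symm
        rw [h2]
        have h3 : (1 + |t|) * |y| ≤ (1 + |t|) ^ 2 / (2 * τ) + τ / 2 * |y| ^ 2 := by
          have : (1 + |t|) ^ 2 / (2 * τ) + τ / 2 * |y| ^ 2 - (1 + |t|) * |y|
              = ((1 + |t|) - τ * |y|) ^ 2 / (2 * τ) := by field_simp; ring
          have h4 : 0 ≤ ((1 + |t|) - τ * |y|) ^ 2 / (2 * τ) := by positivity
          linarith
        linarith
    _ = _ := by rw [Real.exp_add, mul_assoc]

open MeasureTheory ProbabilityTheory in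
lemma gcl_zero (τ : ℝ) (hτ : 0 < τ) (g : ℝ → ℝ) (hg : Continuous g) (C : ℝ)
    (hC : ∀ y, |g y| ≤ C * Real.exp |y|)
    (h : ∀ t : ℝ, ∫ y : ℝ, g y * Real.exp (-τ * y ^ 2 + t * y) = 0) : g = 0 := by
  set G : ℝ → ℝ := fun y => g y * Real.exp (-τ * y ^ 2) with hGdef
  have hG : Continuous G := by fun_prop
  have hGt : ∀ t y, G y * Real.exp (t * y) = g y * Real.exp (-τ * y ^ 2 + t * y) := by
    intro t y; simp only [hGdef]; rw [mul_assoc, ← Real.exp_add]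
  have hI : ∀ t, Integrable (fun y => G y * Real.exp (t * y)) := by
    intro t; simp_rw [hGt]; exact gcl_integrable τ hτ g hg C hC t
  have hGi : Integrable G := by simpa using hI 0
  set μ : Measure ℝ := volume.withDensity (fun y => ENNReal.ofReal (G y)) with hμ
  set ν : Measure ℝ := volume.withDensity (fun y => ENNReal.ofReal (-G y)) with hν
  have : IsFiniteMeasure μ := isFiniteMeasure_withDensity_ofReal hGi.2
  have : IsFiniteMeasure ν := isFiniteMeasure_withDensity_ofReal hGi.neg.2
  have key : ∀ t y, max (G y) 0 * Real.exp (t * y) = max (G y * Real.exp (t * y)) 0 := by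
    intro t y; rw [max_mul_of_nonneg _ _ (Real.exp_pos _).le, zero_mul]
  have key' : ∀ t y, max (-G y) 0 * Real.exp (t * y) = max (-(G y * Real.exp (t * y))) 0 := by
    intro t y; rw [max_mul_of_nonneg _ _ (Real.exp_pos _).le, zero_mul, neg_mul]
  have hIμ : ∀ t, Integrable (fun y => Real.exp (t * y)) μ := by
    intro t
    rw [hμ, integrable_withDensity_iff (by fun_prop) (by simp)]
    refine (hI t).pos_part.congr (Filter.Eventually.of_forall fun y => ?_)
    simp only [ENNReal.toReal_ofReal']
    rw [mul_comm (Real.exp _), key]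
  have hmgf : mgf id μ = mgf id ν := by
    ext t
    simp only [mgf, id]
    rw [hμ, hν, integral_withDensity_eq_integral_toReal_smul (by fun_prop) (by simp),
      integral_withDensity_eq_integral_toReal_smul (by fun_prop) (by simp)]
    simp only [ENNReal.toReal_ofReal', smul_eq_mul, key, key']
    have hn : Integrable (fun y => max (-(G y * Real.exp (t * y))) 0) := (hI t).neg.pos_part
    rw [← sub_eq_zero, ← integral_sub (hI t).pos_part hn]
    refine Eq.trans ?_ (h t)
    congr 1
    ext y
    rw [← hGt]
    rcases le_total 0 (G y * Real.exp (t * y)) with h0 | h0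
    · rw [max_eq_left h0, max_eq_right (by linarith)]; ring
    · rw [max_eq_right h0, max_eq_left (by linarith)]; ring
  have h0 : μ = 0 ↔ ν = 0 := by
    have := congrFun hmgf 0
    rw [mgf_zero', mgf_zero'] at this
    rw [← Measure.measure_univ_eq_zero, ← Measure.measure_univ_eq_zero,
      ← measureReal_eq_zero_iff, ← measureReal_eq_zero_iff, this]
  have hset : integrableExpSet id μ = Set.univ := by
    ext t; simpa [integrableExpSet] using hIμ t
  have hc : complexMGF id μ = complexMGF id ν := by
    ext z
    exact eqOn_complexMGF_of_mgf' hmgf h0 (by simp [hset])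
  have hμν : μ = ν := Measure.ext_of_complexMGF_id_eq hc
  rw [hμ, hν, withDensity_eq_iff_of_sigmaFinite (by fun_prop) (by fun_prop)] at hμν
  have hG0 : G = 0 := by
    refine Continuous.ae_eq_iff_eq volume hG continuous_zero |>.1 ?_
    filter_upwards [hμν] with y hy
    have := congrArg ENNReal.toReal hy
    simp only [ENNReal.toReal_ofReal'] at this
    rcases le_total 0 (G y) with h0 | h0
    · rw [max_eq_left h0, max_eq_right (by linarith)] at this; exact this
    · rw [max_eq_right h0, max_eq_left (by linarith)] at this; simp; linarith
  ext y
  have := congrFun hG0 y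
  simpa [hGdef, (Real.exp_pos _).ne'] using this

open MeasureTheory in
lemma gcl_mean (τ : ℝ) (hτ : 0 < τ) (x : ℝ) :
    ∫ y : ℝ, y * Real.exp (-τ * (y - x) ^ 2) = x * Real.sqrt (Real.pi / τ) := by
  rw [← integral_add_right_eq_self _ x]
  simp only [add_sub_cancel_right, add_mul]
  have h1 : ∫ y : ℝ, y * Real.exp (-τ * y ^ 2) = 0 := by
    have := integral_neg_eq_self (fun y : ℝ => y * Real.exp (-τ * y ^ 2)) volume
    have e : ∀ y : ℝ, -y * Real.exp (-τ * (-y) ^ 2) = -(y * Real.exp (-τ * y ^ 2)) := by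
      intro y; rw [neg_sq]; ring
    simp_rw [e, integral_neg] at this
    linarith
  rw [integral_add (integrable_mul_exp_neg_mul_sq hτ)
    ((integrable_exp_neg_mul_sq hτ).const_mul x), h1, integral_const_mul, integral_gaussian, zero_add]

/-- Gaussian convolution forces linearity: if `f` is continuous with
at most polynomial growth (`|f(y)| ≤ K(1+|y|)^m` for some `K > 0`, `m ∈ ℕ`) and
`∫ f(y) exp(−τ(y−x)²) dy = c x` for all `x`, then `f(y) = c √(τ/π) y` for all `y`. -/
theorem gaussian_convolution_linear (τ c : ℝ) (hτ : 0 < τ)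
    (f : ℝ → ℝ) (hf : Continuous f)
    (hgrowth : ∃ (K : ℝ) (m : ℕ), 0 < K ∧ ∀ y, |f y| ≤ K * (1 + |y|) ^ m)
    (h : ∀ x : ℝ, ∫ y : ℝ, f y * Real.exp (-τ * (y - x) ^ 2) = c * x) :
    ∀ y : ℝ, f y = c * Real.sqrt (τ / Real.pi) * y := by
  obtain ⟨K, m, hK, hfb⟩ := hgrowth
  set a := c * Real.sqrt (τ / Real.pi) with ha
  have hfC : ∀ y, |f y| ≤ (K * (m.factorial * Real.exp 1)) * Real.exp |y| := by
    intro y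
    refine (hfb y).trans ?_
    have h1 := Real.pow_div_factorial_le_exp (1 + |y|) (by positivity) m
    rw [div_le_iff₀ (by positivity), Real.exp_add] at h1
    calc K * (1 + |y|) ^ m ≤ K * (Real.exp 1 * Real.exp |y| * m.factorial) := by gcongr
      _ = _ := by ring
  have hidC : ∀ y : ℝ, |y| ≤ 1 * Real.exp |y| := by
    intro y; have := Real.add_one_le_exp |y|; linarith
  have hexp : ∀ x y : ℝ, Real.exp (-τ * (y - x) ^ 2)
      = Real.exp (-τ * x ^ 2) * Real.exp (-τ * y ^ 2 + (2 * τ * x) * y) := by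
    intro x y; rw [← Real.exp_add]; congr 1; ring
  have hsq : Real.sqrt (τ / Real.pi) * Real.sqrt (Real.pi / τ) = 1 := by
    rw [← Real.sqrt_mul (by positivity)]
    have : τ / Real.pi * (Real.pi / τ) = 1 := by field_simp
    rw [this, Real.sqrt_one]
  have hz := gcl_zero τ hτ (fun y => f y - a * y) (by fun_prop)
    (K * (m.factorial * Real.exp 1) + |a|) (by
      intro y
      refine (abs_sub _ _).trans ?_
      rw [abs_mul, add_mul]
      have := mul_le_mul_of_nonneg_left (hidC y) (abs_nonneg a)
      have := hfC y
      linarith) (by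
      intro t
      obtain ⟨x, rfl⟩ : ∃ x, t = 2 * τ * x := ⟨t / (2 * τ), by field_simp⟩
      have i1 := gcl_integrable τ hτ f hf _ hfC (2 * τ * x)
      have i2 := gcl_integrable τ hτ (fun y => y) continuous_id _ hidC (2 * τ * x)
      have e1 := h x
      have e2 := gcl_mean τ hτ x
      simp_rw [hexp x, mul_left_comm _ (Real.exp (-τ * x ^ 2)),
        MeasureTheory.integral_const_mul] at e1 e2
      simp_rw [sub_mul, mul_assoc a]
      rw [MeasureTheory.integral_sub i1 (i2.const_mul a), MeasureTheory.integral_const_mul]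
      have hp := (Real.exp_pos (-τ * x ^ 2)).ne'
      apply mul_left_cancel₀ hp
      rw [mul_sub, mul_left_comm _ a, e1, e2, ha]
      linear_combination (-c * x) * hsq)
  intro y
  have := congrFun hz y
  simp only [Pi.zero_apply] at this
  linarith
end
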